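/- Let θ ∈ (0, 1/2] and let v ∈ S_{T[θ,S₁]} with basis expansion v = Σ_i v_i e_i be such that v_i = 0 for all i ≤ ⌊θ⁻¹⌋, and suppose min( ‖v + y‖ , ‖v − y‖ ) ≤ θ · (⌊θ⁻¹⌋ + 1) for all y ∈ S_{T[θ,S₁]}. Then v has one of the following two forms: (a) |v_{⌊θ⁻¹⌋+1}| = 1 and |v_i| ≤ θ for all i ≠ ⌊θ⁻¹⌋ + 1; or (b) v = ε e_m + a e_{⌊θ⁻¹⌋+1} for some integer m ≥ ⌊θ⁻¹⌋ + 2, some ε ∈ {−1, 1}, and some real a with |a| ≤ θ. -/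

import Mathlib

open scoped BigOperators

noncomputable section

/-- Projection of a finitely supported vector onto the coordinates in `E`. -/
def tsProj (E : Finset ℕ+) (x : ℕ+ →₀ ℝ) : ℕ+ →₀ ℝ :=
  x.filter fun i => i ∈ E

/-- The Schreier families `S_n` on the positive integers:
`S₁` consists of the sets `F` with `|F| ≤ min F` (together with `∅`), and `S_{n+1}`
consists of unions `F₁ ∪ ⋯ ∪ F_d` of nonempty members `F₁ < ⋯ < F_d` of `S_n`
with `d ≤ min F₁` (together with `∅`). -/
def Schreier : ℕ → Set (Finset ℕ+)
  | 0 => {F | F.card ≤ 1}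
  | 1 => {F | ∀ a ∈ F, F.card ≤ (a : ℕ)}
  | n + 2 =>
      {F | F = ∅ ∨
        ∃ (d : ℕ) (G : Fin d → Finset ℕ+),
          0 < d ∧ (∀ i, G i ∈ Schreier (n + 1)) ∧ (∀ i, (G i).Nonempty) ∧
          (∀ i j : Fin d, i < j → ∀ a ∈ G i, ∀ b ∈ G j, a < b) ∧
          (∀ i, ∀ a ∈ G i, d ≤ (a : ℕ)) ∧ F = Finset.univ.biUnion G}

/-- A tuple of nonempty finite sets `E 0 < E 1 < ⋯` whose set of minima belongs to `S`. -/
def TsAdmissible (S : Set (Finset ℕ+)) {d : ℕ} (E : Fin d → Finset ℕ+) : Prop :=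
  (∀ i, (E i).Nonempty) ∧
  (∀ i j : Fin d, i < j → ∀ a ∈ E i, ∀ b ∈ E j, a < b) ∧
  ∃ μ : Fin d → ℕ+, (∀ i, IsLeast (↑(E i) : Set ℕ+) (μ i)) ∧
    Finset.univ.image μ ∈ S

/-- The iterated norms `‖·‖_m` in the construction of the Tsirelson norm:
`‖x‖₀` is the supremum norm and
`‖x‖_{m+1} = max(‖x‖_m, sup{θ ∑ᵢ ‖Eᵢ x‖_m : E₁ < ⋯ < E_d, {min Eᵢ} ∈ S})`. -/
def tnormAux (θ : ℝ) (S : Set (Finset ℕ+)) : ℕ → (ℕ+ →₀ ℝ) → ℝ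
  | 0, x => ⨆ i, |x i|
  | m + 1, x =>
      max (tnormAux θ S m x)
        (sSup {r : ℝ | ∃ (d : ℕ) (E : Fin d → Finset ℕ+), TsAdmissible S E ∧
          r = θ * ∑ i, tnormAux θ S m (tsProj (E i) x)})

/-- The Tsirelson norm `‖x‖_{θ,S} = sup_m ‖x‖_m` on `c₀₀`. -/
def tnorm (θ : ℝ) (S : Set (Finset ℕ+)) (x : ℕ+ →₀ ℝ) : ℝ :=
  ⨆ m : ℕ, tnormAux θ S m x

/-- `X`, together with the sequence `e` of unit vectors, is (a realization of) the
Tsirelson space `T[θ, S_n]`: a Banach space containing `c₀₀` isometrically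
(w.r.t. the Tsirelson norm) as a dense subspace, in which `(e i)` is a
(1-unconditional) basis, i.e. every `x` has a unique expansion `x = ∑ᵢ aᵢ eᵢ`. -/
structure IsTsirelsonSpace (θ : ℝ) (n : ℕ) (X : Type*) [NormedAddCommGroup X]
    [NormedSpace ℝ X] (e : ℕ+ → X) : Prop where
  complete : CompleteSpace X
  norm_embed : ∀ a : ℕ+ →₀ ℝ, ‖a.sum fun i c => c • e i‖ = tnorm θ (Schreier n) a
  dense_embed : DenseRange fun a : ℕ+ →₀ ℝ => a.sum fun i c => c • e i
  expansion : ∀ x : X, ∃! a : ℕ+ → ℝ, HasSum (fun i => a i • e i) x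

/-!
Put `K = ⌊θ⁻¹⌋` and `N = K + 1`, so that `v` lives on `[N, ∞)`. Testing the hypothesis with
`y = ∑ e_j` over `K` indices `j` far to the right of finite sets `N < A < B` makes `A v`, `B v` and
the summands of `y` into `K + 2` admissible pieces of `v ± y`, whence `‖A v‖ + ‖B v‖ ≤ 1`.

Suppose `|v_N| < 1`. If `v` restricted to `(N, ∞)` had norm less than one, a nearly norming
admissible family for `v` would have a member containing `N` and at most `K` further members, whose
norms add up to at most `K / 2`; as `θ ≤ 1 / K`, this forces `K = 2` and `θ` close to `1 / 2`, and
both the head and the rest have norm close to one. Splitting the head once more produces up to four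
admissible pieces to the right of `N`, whose union has norm close to one, a contradiction. So
`v` restricted to `(N, ∞)` has norm one. If `s` is its first nonzero coordinate, the inequality
`‖A v‖ + ‖B v‖ ≤ 1` leaves no room for a norming family unless `|v_s| = 1`, and then no room for any
further coordinate.

That all coordinates but one unimodular coordinate are at most `θ` in modulus follows from the
test vectors `± e_n ± e_m`, on which `θ ≤ 1 / 2` forces norm one.
-/

open Filter Topology

section Successive

variable {ι κ α : Type*} [Preorder α]

/-- The relation `A < B` between finite sets: every element of `A` lies below every element of
`B`. The empty set precedes, and is preceded by, every set. -/
def Precedes (A B : Finset α) : Prop := ∀ x ∈ A, ∀ y ∈ B, x < y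

/-- Finite sets `E i`, `i ∈ s`, that are successive in some order. Unlike in `TsAdmissible`, the
index set carries no order and empty sets are allowed, so that families can be merged, thinned
out and intersected with a set without reindexing. -/
def SuccessiveOn (s : Finset ι) (E : ι → Finset α) : Prop :=
  (s : Set ι).Pairwise fun i j => Precedes (E i) (E j) ∨ Precedes (E j) (E i)

lemma Precedes.mono {A A' B B' : Finset α} (h : Precedes A B) (hA : A' ⊆ A) (hB : B' ⊆ B) :
    Precedes A' B' :=
  fun x hx y hy => h x (hA hx) y (hB hy)

lemma Precedes.disjoint {A B : Finset α} (h : Precedes A B) : Disjoint A B :=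
  Finset.disjoint_left.2 fun x hA hB => lt_irrefl x (h x hA x hB)

lemma SuccessiveOn.subset {s t : Finset ι} {E : ι → Finset α} (hE : SuccessiveOn s E)
    (h : t ⊆ s) : SuccessiveOn t E :=
  Set.Pairwise.mono (Finset.coe_subset.2 h) hE

lemma SuccessiveOn.mono {s : Finset ι} {E E' : ι → Finset α} (hE : SuccessiveOn s E)
    (h : ∀ i, E' i ⊆ E i) : SuccessiveOn s E' :=
  fun i hi j hj hij =>
    (hE hi hj hij).imp (fun H => H.mono (h i) (h j)) fun H => H.mono (h j) (h i)

lemma SuccessiveOn.pairwiseDisjoint {s : Finset ι} {E : ι → Finset α} (hE : SuccessiveOn s E) :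
    (s : Set ι).PairwiseDisjoint E :=
  fun _ hi _ hj hij => (hE hi hj hij).elim Precedes.disjoint fun h => h.disjoint.symm

lemma SuccessiveOn.disjSum {s : Finset ι} {t : Finset κ} {E : ι → Finset α} {E' : κ → Finset α}
    (hE : SuccessiveOn s E) (hE' : SuccessiveOn t E')
    (h : ∀ i ∈ s, ∀ j ∈ t, Precedes (E i) (E' j)) :
    SuccessiveOn (s.disjSum t) (Sum.elim E E') := by
  rintro (i | i) hi (j | j) hj hij <;>
    simp only [Finset.mem_coe, Finset.inl_mem_disjSum, Finset.inr_mem_disjSum] at hi hj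
  · exact hE hi hj fun H => hij (congrArg _ H)
  · exact Or.inl (h i hi j hj)
  · exact Or.inr (h j hj i hi)
  · exact hE' hi hj fun H => hij (congrArg _ H)

end Successive

section TsirelsonNorm

variable {ι : Type*} {θ : ℝ} {S : Set (Finset ℕ+)}

lemma tsProj_apply (E : Finset ℕ+) (x : ℕ+ →₀ ℝ) (i : ℕ+) :
    tsProj E x i = if i ∈ E then x i else 0 :=
  Finsupp.filter_apply _ _ _

/-- The `ℓ₁`-norm on `c₀₀`, which dominates the Tsirelson norm. -/
def l1Norm (x : ℕ+ →₀ ℝ) : ℝ := x.sum fun _ c => |c|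

lemma l1Norm_eq_sum {x : ℕ+ →₀ ℝ} {F : Finset ℕ+} (h : x.support ⊆ F) :
    l1Norm x = ∑ i ∈ F, |x i| :=
  Finsupp.sum_of_support_subset x h _ fun _ _ => abs_zero

lemma abs_apply_le_l1Norm (x : ℕ+ →₀ ℝ) (i : ℕ+) : |x i| ≤ l1Norm x := by
  rw [l1Norm_eq_sum (Finset.subset_insert i x.support)]
  exact Finset.single_le_sum (f := fun i => |x i|) (fun _ _ => abs_nonneg _)
    (Finset.mem_insert_self _ _)

lemma l1Norm_tsProj (E : Finset ℕ+) (x : ℕ+ →₀ ℝ) :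
    l1Norm (tsProj E x) = ∑ k ∈ x.support with k ∈ E, |x k| := by
  have hsupp : (tsProj E x).support ⊆ x.support.filter (· ∈ E) :=
    (Finsupp.support_filter _ x).subset
  rw [l1Norm_eq_sum hsupp]
  refine Finset.sum_congr rfl fun k hk => ?_
  rw [tsProj_apply, if_pos (Finset.mem_filter.1 hk).2]

lemma sum_l1Norm_tsProj_le {s : Finset ι} {E : ι → Finset ℕ+}
    (hE : (s : Set ι).PairwiseDisjoint E) (x : ℕ+ →₀ ℝ) :
    ∑ i ∈ s, l1Norm (tsProj (E i) x) ≤ l1Norm x := by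
  have hdisj : (s : Set ι).PairwiseDisjoint fun i => x.support.filter (· ∈ E i) :=
    hE.mono fun i k hk => (Finset.mem_filter.1 hk).2
  simp only [l1Norm_tsProj]
  rw [← Finset.sum_biUnion hdisj]
  exact Finset.sum_le_sum_of_subset_of_nonneg
    (Finset.biUnion_subset.2 fun i _ => Finset.filter_subset _ _) fun _ _ _ => abs_nonneg _

lemma TsAdmissible.successiveOn {d : ℕ} {E : Fin d → Finset ℕ+} (hE : TsAdmissible S E) :
    SuccessiveOn Finset.univ E := fun i _ j _ hij =>
  hij.lt_or_gt.imp (hE.2.1 i j) (hE.2.1 j i)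

lemma tnormAux_mono (x : ℕ+ →₀ ℝ) : Monotone fun m => tnormAux θ S m x :=
  monotone_nat_of_le_succ fun _ => le_max_left _ _

lemma tnormAux_nonneg (m : ℕ) (x : ℕ+ →₀ ℝ) : 0 ≤ tnormAux θ S m x :=
  (Real.iSup_nonneg fun i => abs_nonneg (x i)).trans (tnormAux_mono x m.zero_le)

lemma tnormAux_succ_le {m : ℕ} {x : ℕ+ →₀ ℝ} {c : ℝ} (hm : tnormAux θ S m x ≤ c)
    (hE : ∀ (d : ℕ) (E : Fin d → Finset ℕ+), TsAdmissible S E →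
      θ * ∑ i, tnormAux θ S m (tsProj (E i) x) ≤ c) :
    tnormAux θ S (m + 1) x ≤ c :=
  max_le hm (Real.sSup_le (by rintro _ ⟨d, E, hadm, rfl⟩; exact hE d E hadm)
    ((tnormAux_nonneg m x).trans hm))

lemma TsAdmissible.mul_sum_le_l1Norm (hθ1 : θ ≤ 1) {f : (ℕ+ →₀ ℝ) → ℝ} (hf0 : ∀ x, 0 ≤ f x)
    (hf : ∀ x, f x ≤ l1Norm x) {d : ℕ} {E : Fin d → Finset ℕ+} (hE : TsAdmissible S E)
    (x : ℕ+ →₀ ℝ) : θ * ∑ i, f (tsProj (E i) x) ≤ l1Norm x :=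
  calc θ * ∑ i, f (tsProj (E i) x)
      ≤ ∑ i, f (tsProj (E i) x) :=
        mul_le_of_le_one_left (Finset.sum_nonneg fun _ _ => hf0 _) hθ1
    _ ≤ ∑ i, l1Norm (tsProj (E i) x) := Finset.sum_le_sum fun _ _ => hf _
    _ ≤ l1Norm x := sum_l1Norm_tsProj_le hE.successiveOn.pairwiseDisjoint x

lemma tnormAux_le_l1Norm (hθ1 : θ ≤ 1) (m : ℕ) (x : ℕ+ →₀ ℝ) :
    tnormAux θ S m x ≤ l1Norm x := by
  induction m generalizing x with
  | zero => exact ciSup_le (abs_apply_le_l1Norm x)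
  | succ m ih =>
    exact tnormAux_succ_le (ih x) fun d E hE => hE.mul_sum_le_l1Norm hθ1 (tnormAux_nonneg m) ih x

lemma TsAdmissible.mul_sum_tnormAux_le (hθ1 : θ ≤ 1) (m : ℕ) (x : ℕ+ →₀ ℝ) {d : ℕ}
    {E : Fin d → Finset ℕ+} (hE : TsAdmissible S E) :
    θ * ∑ i, tnormAux θ S m (tsProj (E i) x) ≤ tnormAux θ S (m + 1) x := by
  refine le_max_of_le_right (le_csSup ⟨l1Norm x, ?_⟩ ⟨d, E, hE, rfl⟩)
  rintro _ ⟨d', E', hE', rfl⟩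
  exact hE'.mul_sum_le_l1Norm hθ1 (tnormAux_nonneg m) (tnormAux_le_l1Norm hθ1 m) x

lemma bddAbove_range_tnormAux (hθ1 : θ ≤ 1) (x : ℕ+ →₀ ℝ) :
    BddAbove (Set.range fun m => tnormAux θ S m x) :=
  ⟨l1Norm x, by rintro _ ⟨m, rfl⟩; exact tnormAux_le_l1Norm hθ1 m x⟩

lemma tnormAux_le_tnorm (hθ1 : θ ≤ 1) (m : ℕ) (x : ℕ+ →₀ ℝ) :
    tnormAux θ S m x ≤ tnorm θ S x :=
  le_ciSup (bddAbove_range_tnormAux hθ1 x) m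

lemma tnorm_le_l1Norm (hθ1 : θ ≤ 1) (x : ℕ+ →₀ ℝ) : tnorm θ S x ≤ l1Norm x :=
  ciSup_le fun m => tnormAux_le_l1Norm hθ1 m x

lemma tnorm_nonneg (x : ℕ+ →₀ ℝ) : 0 ≤ tnorm θ S x :=
  Real.iSup_nonneg fun m => tnormAux_nonneg m x

lemma tnorm_zero (hθ1 : θ ≤ 1) : tnorm θ S 0 = 0 :=
  le_antisymm ((tnorm_le_l1Norm hθ1 0).trans_eq Finsupp.sum_zero_index) (tnorm_nonneg 0)

lemma abs_apply_le_tnorm (hθ1 : θ ≤ 1) (x : ℕ+ →₀ ℝ) (i : ℕ+) :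
    |x i| ≤ tnorm θ S x :=
  (le_ciSup (f := fun i => |x i|)
    ⟨l1Norm x, by rintro _ ⟨i, rfl⟩; exact abs_apply_le_l1Norm x i⟩ i).trans
    (tnormAux_le_tnorm hθ1 0 x)

lemma TsAdmissible.mul_sum_tnorm_le (hθ1 : θ ≤ 1) (x : ℕ+ →₀ ℝ) {d : ℕ}
    {E : Fin d → Finset ℕ+} (hE : TsAdmissible S E) :
    θ * ∑ i, tnorm θ S (tsProj (E i) x) ≤ tnorm θ S x := by
  have hlim (y : ℕ+ →₀ ℝ) : Tendsto (fun m => tnormAux θ S m y) atTop (𝓝 (tnorm θ S y)) :=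
    tendsto_atTop_ciSup (tnormAux_mono y) (bddAbove_range_tnormAux hθ1 y)
  refine le_of_tendsto' ((tendsto_finsetSum _ fun i _ => hlim (tsProj (E i) x)).const_mul θ)
    fun m => ?_
  exact (hE.mul_sum_tnormAux_le hθ1 m x).trans (tnormAux_le_tnorm hθ1 (m + 1) x)

lemma tnorm_le (hθ0 : 0 ≤ θ) (hθ1 : θ ≤ 1) {x : ℕ+ →₀ ℝ} {c : ℝ} (hc : ∀ i, |x i| ≤ c)
    (hE : ∀ (d : ℕ) (E : Fin d → Finset ℕ+), TsAdmissible S E →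
      θ * ∑ i, tnorm θ S (tsProj (E i) x) ≤ c) :
    tnorm θ S x ≤ c := by
  refine ciSup_le fun m => ?_
  induction m with
  | zero => exact ciSup_le hc
  | succ m ih =>
    refine tnormAux_succ_le ih fun d E hadm => le_trans ?_ (hE d E hadm)
    gcongr
    exact tnormAux_le_tnorm hθ1 m _

lemma tnorm_le_of_abs_le_of_l1Norm_le (hθ0 : 0 ≤ θ) (hθ1 : θ ≤ 1) {x : ℕ+ →₀ ℝ} {c : ℝ}
    (hc : ∀ i, |x i| ≤ c) (hl : θ * l1Norm x ≤ c) : tnorm θ S x ≤ c := by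
  refine tnorm_le hθ0 hθ1 hc fun d E hE => le_trans ?_ hl
  gcongr
  exact (Finset.sum_le_sum fun i _ => tnorm_le_l1Norm hθ1 _).trans
    (sum_l1Norm_tsProj_le hE.successiveOn.pairwiseDisjoint x)

lemma tnorm_le_tnorm_of_abs_le (hθ0 : 0 ≤ θ) (hθ1 : θ ≤ 1) {x y : ℕ+ →₀ ℝ}
    (h : ∀ i, |x i| ≤ |y i|) : tnorm θ S x ≤ tnorm θ S y := by
  refine ciSup_mono (bddAbove_range_tnormAux hθ1 y) fun m => ?_
  induction m generalizing x y with
  | zero => exact ciSup_mono ⟨l1Norm y, by rintro _ ⟨i, rfl⟩; exact abs_apply_le_l1Norm y i⟩ h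
  | succ m ih =>
    refine tnormAux_succ_le ((ih h).trans (tnormAux_mono y m.le_succ)) fun d E hE =>
      le_trans ?_ (hE.mul_sum_tnormAux_le hθ1 m y)
    gcongr with i
    refine ih fun k => ?_
    simp only [tsProj_apply]
    split_ifs
    exacts [h k, le_rfl]

end TsirelsonNorm

section SchreierAdmissible

variable {ι : Type*} {θ : ℝ}

lemma TsAdmissible.card_le {d : ℕ} {E : Fin d → Finset ℕ+} (hE : TsAdmissible (Schreier 1) E)
    {i : Fin d} {k : ℕ+} (hk : k ∈ E i) : d ≤ (k : ℕ) := by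
  obtain ⟨-, hlt, μ, hμ, hcard⟩ := hE
  have hmono : StrictMono μ := fun i j hij => hlt i j hij _ (hμ i).1 _ (hμ j).1
  have hd := hcard (μ i) (Finset.mem_image_of_mem μ (Finset.mem_univ i))
  rw [Finset.card_image_of_injective _ hmono.injective, Finset.card_fin] at hd
  exact hd.trans ((hμ i).2 hk)

lemma SuccessiveOn.exists_tsAdmissible {s : Finset ι} {E : ι → Finset ℕ+}
    (hE : SuccessiveOn s E) (hne : ∀ i ∈ s, (E i).Nonempty)
    (hcard : ∀ i ∈ s, ∀ k ∈ E i, s.card ≤ (k : ℕ)) :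
    ∃ f : Fin s.card ≃ s, TsAdmissible (Schreier 1) fun k => E (f k) := by
  let μ (i : s) : ℕ+ := (E i).min' (hne i i.2)
  have hμ (i : s) : μ i ∈ E i := Finset.min'_mem _ _
  have hinj : Function.Injective μ := fun i j hij => by
    by_contra hne
    have hdisj := hE.pairwiseDisjoint i.2 j.2 (Subtype.coe_ne_coe.2 hne)
    exact Finset.disjoint_left.1 hdisj (hμ i) (hij ▸ hμ j)
  let _ : LinearOrder s := LinearOrder.lift' μ hinj
  let f := Fintype.orderIsoFinOfCardEq s (Fintype.card_coe s)
  refine ⟨f.toEquiv, fun k => hne _ (f k).2, fun i j hij => ?_, fun k => μ (f k),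
    fun k => Finset.isLeast_min' _ _, ?_⟩
  · have hlt : μ (f i) < μ (f j) := f.lt_iff_lt.2 hij
    refine (hE (f i).2 (f j).2 fun h => hlt.ne (congrArg μ (Subtype.ext h))).resolve_right
      fun h => ?_
    exact lt_asymm hlt (h _ (hμ _) _ (hμ _))
  · intro k hk
    obtain ⟨i, -, rfl⟩ := Finset.mem_image.1 hk
    exact Finset.card_image_le.trans ((Finset.card_fin _).trans_le (hcard _ (f i).2 _ (hμ _)))

lemma SuccessiveOn.mul_sum_tnorm_le (hθ1 : θ ≤ 1) {s : Finset ι}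
    {E : ι → Finset ℕ+} (hE : SuccessiveOn s E) (hcard : ∀ i ∈ s, ∀ k ∈ E i, s.card ≤ (k : ℕ))
    (x : ℕ+ →₀ ℝ) :
    θ * ∑ i ∈ s, tnorm θ (Schreier 1) (tsProj (E i) x) ≤ tnorm θ (Schreier 1) x := by
  set t := s.filter fun i => (E i).Nonempty
  have hts : t ⊆ s := Finset.filter_subset _ _
  obtain ⟨f, hadm⟩ := (hE.subset hts).exists_tsAdmissible
    (fun i hi => (Finset.mem_filter.1 hi).2)
    fun i hi k hk => (Finset.card_le_card hts).trans (hcard i (hts hi) k hk)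
  have hempty (i : ι) (hi : ¬(E i).Nonempty) : tnorm θ (Schreier 1) (tsProj (E i) x) = 0 := by
    have hx : tsProj (E i) x = 0 := by
      ext k
      simp [tsProj_apply, Finset.not_nonempty_iff_eq_empty.1 hi]
    rw [hx, tnorm_zero hθ1]
  calc θ * ∑ i ∈ s, tnorm θ (Schreier 1) (tsProj (E i) x)
      = θ * ∑ i ∈ t, tnorm θ (Schreier 1) (tsProj (E i) x) := by
        rw [Finset.sum_filter_of_ne fun i _ => not_imp_comm.1 (hempty i)]
    _ = θ * ∑ k, tnorm θ (Schreier 1) (tsProj (E (f k)) x) := by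
        rw [f.sum_comp fun i : t => tnorm θ (Schreier 1) (tsProj (E i) x)]
        exact congrArg _ (Finset.sum_coe_sort t _).symm
    _ ≤ tnorm θ (Schreier 1) x := hadm.mul_sum_tnorm_le hθ1 x

end SchreierAdmissible

section Truncation

variable {ι : Type*} {θ : ℝ} {a b : ℕ+ → ℝ} {F G : Finset ℕ+}

/-- The restriction of the scalar sequence `a` to the finite set `F`, as a vector of `c₀₀`. -/
def trunc (a : ℕ+ → ℝ) (F : Finset ℕ+) : ℕ+ →₀ ℝ := Finsupp.indicator F fun i _ => a i

/-- The norm in `T[θ, S₁]` of the restriction of the scalar sequence `a` to `F`. -/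
def truncNorm (θ : ℝ) (a : ℕ+ → ℝ) (F : Finset ℕ+) : ℝ := tnorm θ (Schreier 1) (trunc a F)

lemma trunc_apply (a : ℕ+ → ℝ) (F : Finset ℕ+) (i : ℕ+) :
    trunc a F i = if i ∈ F then a i else 0 :=
  Finsupp.indicator_apply F _ i

lemma trunc_smul (c : ℝ) (a : ℕ+ → ℝ) (F : Finset ℕ+) : trunc (c • a) F = c • trunc a F := by
  ext i
  simp [trunc_apply]

lemma tsProj_trunc (a : ℕ+ → ℝ) (E F : Finset ℕ+) : tsProj E (trunc a F) = trunc a (E ∩ F) := by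
  ext i
  simp only [tsProj_apply, trunc_apply, Finset.mem_inter, ite_and]

lemma trunc_eq_trunc_of_subset (h : G ⊆ F) (hab : ∀ i ∈ G, a i = b i)
    (hzero : ∀ i ∈ F, i ∉ G → b i = 0) : trunc a G = trunc b F := by
  ext i
  rw [trunc_apply, trunc_apply]
  split_ifs with hG hF hF
  · exact hab i hG
  · exact absurd (h hG) hF
  · exact (hzero i hF hG).symm
  · rfl

lemma truncNorm_congr (h : ∀ i ∈ F, a i = b i) : truncNorm θ a F = truncNorm θ b F := by
  rw [truncNorm, truncNorm, trunc_eq_trunc_of_subset subset_rfl h fun i hF hF' => absurd hF hF']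

lemma truncNorm_eq_of_subset (h : G ⊆ F) (hzero : ∀ i ∈ F, i ∉ G → a i = 0) :
    truncNorm θ a G = truncNorm θ a F := by
  rw [truncNorm, truncNorm, trunc_eq_trunc_of_subset h (fun _ _ => rfl) hzero]

lemma truncNorm_mono (hθ0 : 0 ≤ θ) (hθ1 : θ ≤ 1) (a : ℕ+ → ℝ) : Monotone (truncNorm θ a) := by
  refine fun F G h => tnorm_le_tnorm_of_abs_le hθ0 hθ1 fun i => ?_
  rw [trunc_apply, trunc_apply]
  split_ifs with hF hG
  · rfl
  · exact absurd (h hF) hG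
  · exact abs_zero.trans_le (abs_nonneg _)
  · rfl

lemma truncNorm_nonneg (a : ℕ+ → ℝ) (F : Finset ℕ+) : 0 ≤ truncNorm θ a F := tnorm_nonneg _

lemma truncNorm_empty (hθ1 : θ ≤ 1) (a : ℕ+ → ℝ) : truncNorm θ a ∅ = 0 := by
  have h : trunc a ∅ = 0 := by
    ext i
    simp [trunc_apply]
  rw [truncNorm, h, tnorm_zero hθ1]

lemma abs_le_truncNorm (hθ1 : θ ≤ 1) (a : ℕ+ → ℝ) {i : ℕ+} (hi : i ∈ F) :
    |a i| ≤ truncNorm θ a F := by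
  simpa only [trunc_apply, if_pos hi, truncNorm] using
    abs_apply_le_tnorm (S := Schreier 1) hθ1 (trunc a F) i

lemma truncNorm_eq_one (hθ0 : 0 ≤ θ) (hθ1 : θ ≤ 1) (hF : F.Nonempty) (ha : ∀ i ∈ F, |a i| = 1)
    (hcard : θ * F.card ≤ 1) : truncNorm θ a F = 1 := by
  obtain ⟨k, hk⟩ := hF
  refine le_antisymm (tnorm_le_of_abs_le_of_l1Norm_le hθ0 hθ1 (fun i => ?_) ?_)
    ((ha k hk).symm.trans_le (abs_le_truncNorm hθ1 a hk))
  · rw [trunc_apply]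
    split_ifs with hi
    · exact (ha i hi).le
    · exact abs_zero.trans_le zero_le_one
  · have hl : l1Norm (trunc a F) = ∑ _ ∈ F, (1 : ℝ) := by
      have hsupp : (trunc a F).support ⊆ F := Finsupp.support_indicator_subset F _
      rw [l1Norm_eq_sum hsupp]
      exact Finset.sum_congr rfl fun i hi => by rw [trunc_apply, if_pos hi, ha i hi]
    simpa [hl] using hcard

lemma SuccessiveOn.mul_sum_truncNorm_le (hθ1 : θ ≤ 1) {s : Finset ι} {E : ι → Finset ℕ+}
    (hE : SuccessiveOn s E) (hcard : ∀ i ∈ s, ∀ k ∈ E i, s.card ≤ (k : ℕ)) (a : ℕ+ → ℝ)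
    (hEF : ∀ i ∈ s, E i ⊆ F) :
    θ * ∑ i ∈ s, truncNorm θ a (E i) ≤ truncNorm θ a F := by
  refine le_trans (le_of_eq ?_) (hE.mul_sum_tnorm_le hθ1 hcard (trunc a F))
  congr 1
  refine Finset.sum_congr rfl fun i hi => ?_
  rw [tsProj_trunc, Finset.inter_eq_left.2 (hEF i hi), truncNorm]

lemma exists_successiveOn_of_lt_truncNorm (hθ0 : 0 ≤ θ) (hθ1 : θ ≤ 1) {c : ℝ}
    (hcoord : ∀ i ∈ F, |a i| ≤ c) (hc0 : 0 ≤ c) (hc : c < truncNorm θ a F) :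
    ∃ (d : ℕ) (E : Fin d → Finset ℕ+), SuccessiveOn Finset.univ E ∧
      (∀ i, ∀ k ∈ E i, d ≤ (k : ℕ)) ∧ (∀ i, E i ⊆ F) ∧ c < θ * ∑ i, truncNorm θ a (E i) := by
  by_contra! hcon
  refine hc.not_ge (tnorm_le hθ0 hθ1 (fun i => ?_) fun d E hE => ?_)
  · rw [trunc_apply]
    split_ifs with hi
    · exact hcoord i hi
    · exact abs_zero.trans_le hc0
  · simp only [tsProj_trunc]
    exact hcon d (fun i => E i ∩ F) (hE.successiveOn.mono fun i => Finset.inter_subset_left)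
      (fun i k hk => hE.card_le (Finset.mem_inter.1 hk).1) fun i => Finset.inter_subset_right

/-- A family of successive subsets of `F`, admissible for `S₁`, whose first member `G` contains
`N`; the remaining members are `E i`, `i ∈ t`. -/
structure HeadSplitting (N : ℕ+) (F G : Finset ℕ+) (t : Finset ι) (E : ι → Finset ℕ+) :
    Prop where
  mem_head : N ∈ G
  head_subset : G ⊆ F
  subset : ∀ i ∈ t, E i ⊆ F
  head_precedes : ∀ i ∈ t, Precedes G (E i)
  successiveOn : SuccessiveOn t E
  card_lt : t.card < (N : ℕ)

lemma HeadSplitting.lt {N : ℕ+} {t : Finset ι} {E : ι → Finset ℕ+}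
    (h : HeadSplitting N F G t E) {i : ι} (hi : i ∈ t) {k : ℕ+} (hk : k ∈ E i) : N < k :=
  h.head_precedes i hi N h.mem_head k hk

lemma HeadSplitting.mul_sum_truncNorm_le {N : ℕ+} {t : Finset ι} {E : ι → Finset ℕ+}
    (h : HeadSplitting N F G t E) (hθ1 : θ ≤ 1) (a : ℕ+ → ℝ) :
    θ * ∑ i ∈ t, truncNorm θ a (E i) ≤ truncNorm θ a (t.biUnion E) :=
  h.successiveOn.mul_sum_truncNorm_le hθ1
    (fun _ hi _ hk => h.card_lt.le.trans (h.lt hi hk).le) a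
    fun _ hi => Finset.subset_biUnion_of_mem E hi

lemma exists_headSplitting (hθ0 : 0 ≤ θ) (hθ1 : θ ≤ 1) {N : ℕ+} {c : ℝ} (hF : ∀ k ∈ F, N ≤ k)
    (hN : |a N| ≤ c) (htail : ∀ B : Finset ℕ+, (∀ k ∈ B, N < k) → truncNorm θ a B ≤ c)
    (hc : c < truncNorm θ a F) :
    ∃ (d : ℕ) (t : Finset (Fin d)) (E : Fin d → Finset ℕ+) (G : Finset ℕ+),
      HeadSplitting N F G t E ∧ c < θ * (truncNorm θ a G + ∑ i ∈ t, truncNorm θ a (E i)) := by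
  have hcoord (k : ℕ+) (hk : k ∈ F) : |a k| ≤ c := by
    rcases (hF k hk).eq_or_lt with rfl | hlt
    · exact hN
    · exact (abs_le_truncNorm hθ1 a (Finset.mem_singleton_self k)).trans
        (htail {k} fun i hi => Finset.mem_singleton.1 hi ▸ hlt)
  obtain ⟨d, E, hE, hd, hEF, hsum⟩ :=
    exists_successiveOn_of_lt_truncNorm hθ0 hθ1 hcoord ((abs_nonneg _).trans hN) hc
  obtain ⟨j, hj⟩ : ∃ j, N ∈ E j := by
    by_contra! hNE
    have hle := hE.mul_sum_truncNorm_le hθ1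
      (fun i _ k hk => (Finset.card_fin d).trans_le (hd i k hk)) a
      fun i hi => Finset.subset_biUnion_of_mem E hi
    refine hsum.not_ge (hle.trans (htail _ fun k hk => ?_))
    obtain ⟨i, -, hk⟩ := Finset.mem_biUnion.1 hk
    exact (hF k (hEF i hk)).lt_of_ne fun h => hNE i (h ▸ hk)
  refine ⟨d, Finset.univ.erase j, E, E j, ⟨hj, hEF j, fun i _ => hEF i, fun i hi => ?_,
    hE.subset (Finset.erase_subset _ _), ?_⟩, ?_⟩
  · refine (hE (Finset.mem_univ i) (Finset.mem_univ j) (Finset.ne_of_mem_erase hi)).symm.elim id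
      fun h _ _ k hk => ?_
    exact absurd (h k hk N hj) (hF k (hEF i hk)).not_gt
  · have := hd j N hj
    have := j.pos
    rw [Finset.card_erase_of_mem (Finset.mem_univ j), Finset.card_fin]
    omega
  · rwa [Finset.add_sum_erase _ (fun i => truncNorm θ a (E i)) (Finset.mem_univ j)]

end Truncation

section TestVectors

variable {θ c : ℝ} {a : ℕ+ → ℝ} {N : ℕ+}

/-- The condition `min (‖v + y‖, ‖v - y‖) ≤ c` for all finitely supported `y` of norm one, as seen
by the truncations of the coordinate sequence `a` of `v` to sets that carry `y`. -/
def SignedSumBound (θ : ℝ) (a : ℕ+ → ℝ) (c : ℝ) : Prop :=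
  ∀ (w : ℕ+ → ℝ) (F : Finset ℕ+), truncNorm θ w F = 1 →
    ∃ σ : ℝ, |σ| = 1 ∧ truncNorm θ (a + σ • w) F ≤ c

/-- Any two successive pieces of `a` to the right of `N` have norms with sum at most one. -/
def SuccessiveSumLeOne (θ : ℝ) (a : ℕ+ → ℝ) (N : ℕ+) : Prop :=
  ∀ A B : Finset ℕ+, (∀ k ∈ A, N < k) → (∀ k ∈ B, N < k) → Precedes A B →
    truncNorm θ a A + truncNorm θ a B ≤ 1

lemma exists_abs_eq_one_abs_add (r : ℝ) : ∃ s : ℝ, |s| = 1 ∧ |r + s| = |r| + 1 := by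
  rcases le_total 0 r with hr | hr
  · exact ⟨1, abs_one, by rw [abs_of_nonneg hr, abs_of_nonneg (by linarith)]⟩
  · exact ⟨-1, by simp, by rw [abs_of_nonpos hr, abs_of_nonpos (by linarith)]; ring⟩

-- The test vector is `s • e n - t • e m`, with `s` and `t` the signs of `a n` and `a m`: adding it
-- enlarges `a n`, subtracting it enlarges `a m`.
lemma SignedSumBound.min_abs_add_one_le (h : SignedSumBound θ a c) (hθ0 : 0 ≤ θ)
    (hθ : θ ≤ 1 / 2) {n m : ℕ+} (hnm : n ≠ m) : min |a n| |a m| + 1 ≤ c := by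
  have hθ1 : θ ≤ 1 := by linarith
  obtain ⟨s, hs, has⟩ := exists_abs_eq_one_abs_add (a n)
  obtain ⟨t, ht, hat⟩ := exists_abs_eq_one_abs_add (a m)
  set w : ℕ+ → ℝ := fun i => if i = n then s else -t with hw
  have hwn : w n = s := if_pos rfl
  have hwm : w m = -t := if_neg hnm.symm
  have hnorm : truncNorm θ w {n, m} = 1 := by
    refine truncNorm_eq_one hθ0 hθ1 (Finset.insert_nonempty n {m}) (fun i _ => ?_) ?_
    · rw [hw]
      dsimp only
      split_ifs
      exacts [hs, (abs_neg t).trans ht]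
    · rw [Finset.card_pair hnm]
      push_cast
      linarith
  obtain ⟨σ, hσ, hle⟩ := h w {n, m} hnorm
  have hcoord (i : ℕ+) (hi : i ∈ ({n, m} : Finset ℕ+)) : |a i + σ * w i| ≤ c :=
    (abs_le_truncNorm hθ1 (a + σ • w) hi).trans hle
  rcases eq_or_eq_neg_of_abs_eq hσ with rfl | rfl
  · have hn := hcoord n (by simp)
    rw [hwn, one_mul, has] at hn
    exact (add_le_add_left (min_le_left _ _) 1).trans hn
  · have hm := hcoord m (by simp)
    rw [hwm, neg_one_mul, neg_neg, hat] at hm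
    exact (add_le_add_left (min_le_right _ _) 1).trans hm

lemma exists_card_eq_precedes_abs_lt (ha : Tendsto a atTop (𝓝 0)) (A : Finset ℕ+) (K : ℕ)
    {ε : ℝ} (hε : 0 < ε) :
    ∃ Y : Finset ℕ+, Y.card = K ∧ Precedes A Y ∧ ∀ y ∈ Y, |a y| < ε := by
  have hsmall : ∀ᶠ i in atTop, |a i| < ε := by
    simpa [Real.dist_eq] using Metric.tendsto_nhds.1 ha ε hε
  have hfar : ∀ᶠ i in atTop, ∀ k ∈ A, k < i :=
    (Filter.eventually_all_finset A).2 fun k _ => eventually_gt_atTop k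
  obtain ⟨L, hL⟩ := eventually_atTop.1 (hsmall.and hfar)
  obtain ⟨Y, hYL, hY⟩ := (Set.Ici_infinite L).exists_subset_card_eq K
  exact ⟨Y, hY, fun k hk y hy => (hL y (hYL hy)).2 k hk, fun y hy => (hL y (hYL hy)).1⟩

lemma mul_truncNorm_add_sum_abs_le (hθ0 : 0 ≤ θ) (hθ1 : θ ≤ 1) {A B Y F : Finset ℕ+}
    (hAB : Precedes A B) (hAY : Precedes A Y) (hBY : Precedes B Y)
    (hcard : ∀ k ∈ F, Y.card + 2 ≤ (k : ℕ)) (hA : A ⊆ F) (hB : B ⊆ F) (hY : Y ⊆ F) :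
    θ * (truncNorm θ a A + truncNorm θ a B + ∑ y ∈ Y, |a y|) ≤ truncNorm θ a F := by
  set E : Bool → Finset ℕ+ := fun b => cond b A B
  have hsucc : SuccessiveOn Finset.univ E := by
    rintro (_ | _) - (_ | _) - hij
    exacts [absurd rfl hij, Or.inr hAB, Or.inl hAB, absurd rfl hij]
  have hsuccY : SuccessiveOn Y fun y => ({y} : Finset ℕ+) := fun x _ y _ hxy => by
    simpa [Precedes] using hxy.lt_or_gt
  have hEY : ∀ b ∈ Finset.univ, ∀ y ∈ Y, Precedes (E b) {y} := by
    rintro (_ | _) - y hy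
    exacts [hBY.mono subset_rfl (Finset.singleton_subset_iff.2 hy),
      hAY.mono subset_rfl (Finset.singleton_subset_iff.2 hy)]
  have hsub : ∀ i ∈ Finset.univ.disjSum Y, Sum.elim E (fun y => {y}) i ⊆ F := by
    rintro ((_ | _) | y) hi
    exacts [hB, hA, Finset.singleton_subset_iff.2 (hY (Finset.inr_mem_disjSum.1 hi))]
  have hle := (hsucc.disjSum hsuccY hEY).mul_sum_truncNorm_le hθ1 (fun i hi k hk => by
    simpa [add_comm] using hcard k (hsub i hi hk)) a hsub
  simp only [Finset.sum_disjSum, Fintype.sum_bool, Sum.elim_inl, Sum.elim_inr] at hle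
  refine le_trans ?_ hle
  gcongr with y
  · rfl
  · rfl
  · exact abs_le_truncNorm hθ1 a (Finset.mem_singleton_self y)

-- The `K + 2` pieces `A`, `B` and `{y}`, `y ∈ Y`, are admissible for `a ± 1_Y`, where `1_Y` is a
-- vector of norm one.
lemma SignedSumBound.add_add_card_mul_le (hθ0 : 0 < θ) (hθ1 : θ ≤ 1) {A B Y : Finset ℕ+}
    (h : SignedSumBound θ a (θ * (Y.card + 1))) (hYne : Y.Nonempty) (hθY : θ * Y.card ≤ 1)
    (hAB : Precedes A B) (hAY : Precedes A Y) (hBY : Precedes B Y)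
    (hcard : ∀ k ∈ A ∪ B ∪ Y, Y.card + 2 ≤ (k : ℕ)) {ε : ℝ} (haY : ∀ y ∈ Y, |a y| ≤ ε) :
    truncNorm θ a A + truncNorm θ a B + Y.card * (1 - ε) ≤ Y.card + 1 := by
  set w : ℕ+ → ℝ := Set.indicator Y 1
  have hwY (i : ℕ+) (hi : i ∈ Y) : w i = 1 := Set.indicator_of_mem hi 1
  have hw0 (i : ℕ+) (hi : i ∉ Y) : w i = 0 := Set.indicator_of_notMem hi 1
  have hnorm : truncNorm θ w (A ∪ B ∪ Y) = 1 := by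
    rw [← truncNorm_eq_of_subset Finset.subset_union_right fun i _ hi => hw0 i hi]
    exact truncNorm_eq_one hθ0.le hθ1 hYne (fun i hi => by rw [hwY i hi, abs_one]) hθY
  obtain ⟨σ, hσ, hle⟩ := h w _ hnorm
  have hoff {D : Finset ℕ+} (hD : Precedes D Y) : truncNorm θ (a + σ • w) D = truncNorm θ a D :=
    truncNorm_congr fun i hi => by simp [hw0 i (Finset.disjoint_left.1 hD.disjoint hi)]
  have hon : Y.card * (1 - ε) ≤ ∑ y ∈ Y, |(a + σ • w) y| := by
    rw [← nsmul_eq_mul]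
    refine Finset.card_nsmul_le_sum Y _ _ fun y hy => ?_
    have htri := abs_sub_abs_le_abs_add σ (a y)
    simp only [Pi.add_apply, Pi.smul_apply, smul_eq_mul, hwY y hy, mul_one]
    rw [add_comm (a y)]
    linarith [haY y hy]
  have hbig := mul_truncNorm_add_sum_abs_le (a := a + σ • w) hθ0.le hθ1 hAB hAY hBY hcard
    (by grind) (by grind) (by grind)
  rw [hoff hAY, hoff hBY] at hbig
  linarith [le_of_mul_le_mul_left (hbig.trans hle) hθ0]

lemma SignedSumBound.successiveSumLeOne {K : ℕ} (h : SignedSumBound θ a (θ * (K + 1)))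
    (hθ0 : 0 < θ) (hθ1 : θ ≤ 1) (hK : 0 < K) (hθK : θ * K ≤ 1) (hN : K < (N : ℕ))
    (ha : Tendsto a atTop (𝓝 0)) : SuccessiveSumLeOne θ a N := by
  intro A B hA hB hAB
  refine le_of_forall_pos_le_add fun δ hδ => ?_
  have hε : 0 < δ / K := by positivity
  obtain ⟨Y, rfl, hY, haY⟩ := exists_card_eq_precedes_abs_lt ha (insert N (A ∪ B)) K hε
  have hAY : Precedes A Y := hY.mono (by grind) subset_rfl
  have hBY : Precedes B Y := hY.mono (by grind) subset_rfl
  have hNY : ∀ k ∈ Y, N < k := hY N (Finset.mem_insert_self _ _)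
  have hcard (k : ℕ+) (hk : k ∈ A ∪ B ∪ Y) : Y.card + 2 ≤ (k : ℕ) := by
    have hNk : (N : ℕ) < k := by
      simp only [Finset.mem_union] at hk
      exact hk.elim (Or.elim · (hA k) (hB k)) (hNY k)
    omega
  have hle := SignedSumBound.add_add_card_mul_le hθ0 hθ1 h (Finset.card_pos.1 hK) hθK hAB hAY hBY
    hcard fun y hy => (haY y hy).le
  rw [mul_sub, mul_div_cancel₀ δ (by positivity)] at hle
  linarith

end TestVectors

section SequenceDichotomy

variable {θ : ℝ} {a : ℕ+ → ℝ} {N : ℕ+}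

lemma SuccessiveSumLeOne.truncNorm_le_one (h : SuccessiveSumLeOne θ a N) {B : Finset ℕ+}
    (hB : ∀ k ∈ B, N < k) : truncNorm θ a B ≤ 1 := by
  have hsum := h ∅ B (by simp) hB (by simp [Precedes])
  linarith [truncNorm_nonneg (θ := θ) a ∅]

lemma SuccessiveSumLeOne.abs_add_truncNorm_le (h : SuccessiveSumLeOne θ a N) (hθ1 : θ ≤ 1)
    {s : ℕ+} (hs : N < s) {B : Finset ℕ+} (hB : ∀ k ∈ B, s < k) :
    |a s| + truncNorm θ a B ≤ 1 :=
  (add_le_add_left (abs_le_truncNorm hθ1 a (Finset.mem_singleton_self s)) _).trans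
    (h {s} B (by simpa) (fun k hk => hs.trans (hB k hk)) (by simpa [Precedes]))

-- Let `δ = |a s|`. If `δ < 1`, a vector of norm greater than `max δ (1 - δ / 2)` supported on
-- `[s, ∞)` splits at `s` into a head of norm `p ≥ δ` and a rest contributing at most `1 - p`, so
-- its norm is at most `θ p + (1 - p) ≤ 1 - δ / 2`.
lemma SuccessiveSumLeOne.abs_eq_one (h : SuccessiveSumLeOne θ a N) (hθ0 : 0 ≤ θ)
    (hθ : θ ≤ 1 / 2) {s : ℕ+} (hs : N < s) (has : a s ≠ 0)
    (hzero : ∀ i, N < i → i < s → a i = 0)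
    (htail : ∀ c < 1, ∃ B : Finset ℕ+, (∀ k ∈ B, N < k) ∧ c < truncNorm θ a B) : |a s| = 1 := by
  have hθ1 : θ ≤ 1 := by linarith
  have hpos : 0 < |a s| := abs_pos.2 has
  have hs1 : |a s| ≤ 1 := by
    linarith [h.abs_add_truncNorm_le hθ1 hs (B := ∅) (by simp), truncNorm_nonneg (θ := θ) a ∅]
  by_contra hne
  obtain ⟨B, hNB, hB⟩ := htail (max |a s| (1 - |a s| / 2))
    (max_lt (hs1.lt_of_ne hne) (by linarith))
  have hF : truncNorm θ a {k ∈ B | s ≤ k} = truncNorm θ a B :=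
    truncNorm_eq_of_subset (Finset.filter_subset _ _) fun i hi hi' =>
      hzero i (hNB i hi) (not_le.1 fun hsi => hi' (Finset.mem_filter.2 ⟨hi, hsi⟩))
  obtain ⟨d, t, E, G, hG, hlt⟩ := exists_headSplitting hθ0 hθ1
    (fun k hk => (Finset.mem_filter.1 hk).2) (le_max_left _ _)
    (fun D hD => le_max_of_le_right (by linarith [h.abs_add_truncNorm_le hθ1 hs hD]))
    (hB.trans_eq hF.symm)
  have hhead : |a s| ≤ truncNorm θ a G := abs_le_truncNorm hθ1 a hG.mem_head
  have hrest : truncNorm θ a G + θ * ∑ i ∈ t, truncNorm θ a (E i) ≤ 1 := by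
    refine le_trans (add_le_add_right (hG.mul_sum_truncNorm_le hθ1 a) _)
      (h G (t.biUnion E) (fun k hk => ?_) (fun k hk => ?_) fun x hx y hy => ?_)
    · exact hs.trans_le (Finset.mem_filter.1 (hG.head_subset hk)).2
    · obtain ⟨i, hi, hk⟩ := Finset.mem_biUnion.1 hk
      exact hs.trans (hG.lt hi hk)
    · obtain ⟨i, hi, hy⟩ := Finset.mem_biUnion.1 hy
      exact hG.head_precedes i hi x hx y hy
  nlinarith [le_max_right |a s| (1 - |a s| / 2)]

lemma SuccessiveSumLeOne.exists_abs_eq_one (h : SuccessiveSumLeOne θ a N) (hθ0 : 0 ≤ θ)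
    (hθ : θ ≤ 1 / 2)
    (htail : ∀ c < 1, ∃ B : Finset ℕ+, (∀ k ∈ B, N < k) ∧ c < truncNorm θ a B) :
    ∃ m, N < m ∧ |a m| = 1 ∧ ∀ i, N < i → i ≠ m → a i = 0 := by
  have hθ1 : θ ≤ 1 := by linarith
  have hex : ∃ s, N < s ∧ a s ≠ 0 := by
    by_contra! hcon
    obtain ⟨B, hNB, hB⟩ := htail 0 one_pos
    rw [← truncNorm_eq_of_subset B.empty_subset fun i hi _ => hcon i (hNB i hi),
      truncNorm_empty hθ1] at hB
    exact lt_irrefl _ hB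
  obtain ⟨s, ⟨hs, has⟩, hmin⟩ := exists_minimal_of_wellFoundedLT (fun s => N < s ∧ a s ≠ 0) hex
  have hzero (i : ℕ+) (hi : N < i) (his : i < s) : a i = 0 := by
    by_contra hne
    exact his.not_ge (hmin ⟨hi, hne⟩ his.le)
  have hs1 : |a s| = 1 := h.abs_eq_one hθ0 hθ hs has hzero htail
  refine ⟨s, hs, hs1, fun i hi his => ?_⟩
  rcases his.lt_or_gt with hlt | hgt
  · exact hzero i hi hlt
  · have hsum := h.abs_add_truncNorm_le hθ1 hs (B := {i}) (by simpa)
    have hle := abs_le_truncNorm hθ1 a (Finset.mem_singleton_self i)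
    exact abs_nonpos_iff.1 (by linarith)

lemma sum_le_half_of_pairwise_add_le_one {ι : Type*} {s : Finset ι} {p : ι → ℝ} {K : ℕ}
    (hK : 2 ≤ K) (hs : s.card ≤ K) (h1 : ∀ i ∈ s, p i ≤ 1)
    (h2 : (s : Set ι).Pairwise fun i j => p i + p j ≤ 1) : ∑ i ∈ s, p i ≤ K / 2 := by
  classical
  have hK' : (2 : ℝ) ≤ K := by exact_mod_cast hK
  have hs' : (s.card : ℝ) ≤ K := by exact_mod_cast hs
  by_cases h : ∃ j ∈ s, 1 / 2 < p j
  · obtain ⟨j, hj, hpj⟩ := h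
    have hrest : ∑ i ∈ s.erase j, p i ≤ (s.erase j).card • (1 - p j) :=
      Finset.sum_le_card_nsmul _ _ _ fun i hi => by
        linarith [h2 (Finset.mem_of_mem_erase hi) hj (Finset.ne_of_mem_erase hi)]
    rw [nsmul_eq_mul, Finset.cast_card_erase_of_mem hj] at hrest
    rw [← Finset.add_sum_erase _ _ hj]
    nlinarith [h1 j hj]
  · push Not at h
    have hle := Finset.sum_le_card_nsmul s p (1 / 2) h
    rw [nsmul_eq_mul] at hle
    linarith

lemma HeadSplitting.sum_truncNorm_le {ι : Type*} {F G : Finset ℕ+} {t : Finset ι}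
    {E : ι → Finset ℕ+} (h : HeadSplitting N F G t E) (hsum : SuccessiveSumLeOne θ a N) {K : ℕ}
    (hK : 2 ≤ K) (hN : (N : ℕ) ≤ K + 1) : ∑ i ∈ t, truncNorm θ a (E i) ≤ K / 2 := by
  have hgt (i : ι) (hi : i ∈ t) : ∀ k ∈ E i, N < k := fun k hk => h.lt hi hk
  refine sum_le_half_of_pairwise_add_le_one hK (Nat.lt_succ_iff.1 (h.card_lt.trans_le hN))
    (fun i hi => hsum.truncNorm_le_one (hgt i hi)) fun i hi j hj hij => ?_
  rcases h.successiveOn hi hj hij with hlt | hlt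
  · exact hsum _ _ (hgt i hi) (hgt j hj) hlt
  · rw [add_comm]
    exact hsum _ _ (hgt j hj) (hgt i hi) hlt

lemma SuccessiveSumLeOne.exists_almost_isometric_headSplitting (h : SuccessiveSumLeOne θ a N)
    (hθ0 : 0 ≤ θ) (hθ : θ ≤ 1 / 2) {K : ℕ} (hK : 2 ≤ K) (hθK : θ * K ≤ 1)
    (hNK : (N : ℕ) ≤ K + 1) (hle : ∀ G, truncNorm θ a G ≤ 1) {ε : ℝ} (hε : ε ≤ 1 / 6)
    (hN : |a N| ≤ 1 - ε)
    (htail : ∀ B : Finset ℕ+, (∀ k ∈ B, N < k) → truncNorm θ a B ≤ 1 - ε)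
    {F : Finset ℕ+} (hF : ∀ k ∈ F, N ≤ k) (hlt : 1 - ε < truncNorm θ a F) :
    K = 2 ∧ ∃ (d : ℕ) (t : Finset (Fin d)) (E : Fin d → Finset ℕ+) (G : Finset ℕ+),
      HeadSplitting N F G t E ∧ 1 - ε < 2 * θ ∧ 1 - 2 * ε < truncNorm θ a G ∧
        1 - 2 * ε < ∑ i ∈ t, truncNorm θ a (E i) := by
  obtain ⟨d, t, E, G, hG, hsplit⟩ :=
    exists_headSplitting hθ0 (hθ.trans (by norm_num)) hF hN htail hlt
  have hrest := hG.sum_truncNorm_le h hK hNK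
  have hrest0 : 0 ≤ ∑ i ∈ t, truncNorm θ a (E i) :=
    Finset.sum_nonneg fun i _ => truncNorm_nonneg a (E i)
  have hG0 : 0 ≤ truncNorm θ a G := truncNorm_nonneg a G
  have hG1 := hle G
  obtain rfl : K = 2 := by
    by_contra hK2
    have hK3 : (3 : ℝ) ≤ K := by exact_mod_cast (show 3 ≤ K by omega)
    have hθ3 : θ ≤ 1 / 3 := by nlinarith
    have := mul_le_mul_of_nonneg_left (add_le_add hG1 hrest) hθ0
    linarith
  refine ⟨rfl, d, t, E, G, hG, ?_, ?_, ?_⟩ <;> push_cast at hrest <;>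
    nlinarith [hrest0, hG0]

lemma HeadSplitting.exists_mul_sum_add_sum_le {ι κ : Type*} {F G G' : Finset ℕ+} {t : Finset ι}
    {t' : Finset κ} {E : ι → Finset ℕ+} {E' : κ → Finset ℕ+} (h : HeadSplitting N F G t E)
    (h' : HeadSplitting N G G' t' E') (hN : (N : ℕ) ≤ 3) (hθ1 : θ ≤ 1) :
    ∃ D : Finset ℕ+, (∀ k ∈ D, N < k) ∧
      θ * (∑ i ∈ t', truncNorm θ a (E' i) + ∑ i ∈ t, truncNorm θ a (E i)) ≤ truncNorm θ a D := by
  have hsucc : SuccessiveOn (t'.disjSum t) (Sum.elim E' E) :=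
    h'.successiveOn.disjSum h.successiveOn fun i hi j hj =>
      (h.head_precedes j hj).mono (h'.subset i hi) subset_rfl
  have hgt : ∀ i ∈ t'.disjSum t, ∀ k ∈ Sum.elim E' E i, N < k := by
    rintro (i | i) hi k hk
    exacts [h'.lt (Finset.inl_mem_disjSum.1 hi) hk, h.lt (Finset.inr_mem_disjSum.1 hi) hk]
  refine ⟨(t'.disjSum t).biUnion (Sum.elim E' E), fun k hk => ?_, ?_⟩
  · obtain ⟨i, hi, hk⟩ := Finset.mem_biUnion.1 hk
    exact hgt i hi k hk
  · have hle := hsucc.mul_sum_truncNorm_le hθ1 (fun i hi k hk => ?_) a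
      fun i hi => Finset.subset_biUnion_of_mem (Sum.elim E' E) hi
    · simpa only [Finset.sum_disjSum, Sum.elim_inl, Sum.elim_inr] using hle
    · have hk : (N : ℕ) < k := hgt i hi k hk
      have := h.card_lt
      have := h'.card_lt
      rw [Finset.card_disjSum]
      omega

-- Otherwise `K = 2`, so `N ≤ 3`, and a vector of norm almost one splits at `N` into a head and a
-- rest of norm almost one each; so does its head. The two rests consist of at most four successive
-- pieces to the right of `N`, which is admissible beyond `3`, so together their norm is almost one.
lemma SuccessiveSumLeOne.exists_tail_lt_truncNorm (h : SuccessiveSumLeOne θ a N) (hθ0 : 0 ≤ θ)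
    (hθ : θ ≤ 1 / 2) {K : ℕ} (hK : 2 ≤ K) (hθK : θ * K ≤ 1) (hNK : (N : ℕ) ≤ K + 1)
    (hlub : IsLUB (Set.range (truncNorm θ a)) 1) (hzero : ∀ i < N, a i = 0) (hN : |a N| < 1)
    {c : ℝ} (hc : c < 1) : ∃ B : Finset ℕ+, (∀ k ∈ B, N < k) ∧ c < truncNorm θ a B := by
  by_contra! hcon
  have hle (G : Finset ℕ+) : truncNorm θ a G ≤ 1 := hlub.1 ⟨G, rfl⟩
  obtain ⟨ε, hε, hcε, hNε, hε6⟩ :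
      ∃ ε > 0, c ≤ 1 - 4 * ε ∧ |a N| ≤ 1 - 4 * ε ∧ 2 * ε ≤ 1 / 6 := by
    refine ⟨min (1 - max c |a N|) (1 / 3) / 4, ?_, ?_, ?_, ?_⟩
    · exact div_pos (lt_min (by linarith [max_lt hc hN]) (by norm_num)) four_pos
    · linarith [min_le_left (1 - max c |a N|) (1 / 3), le_max_left c |a N|]
    · linarith [min_le_left (1 - max c |a N|) (1 / 3), le_max_right c |a N|]
    · linarith [min_le_right (1 - max c |a N|) (1 / 3)]
  have htail (B : Finset ℕ+) (hB : ∀ k ∈ B, N < k) : truncNorm θ a B ≤ 1 - 4 * ε :=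
    (hcon B hB).trans hcε
  obtain ⟨_, ⟨F, rfl⟩, hF, -⟩ := hlub.exists_between (show 1 - ε < 1 by linarith)
  rw [← truncNorm_eq_of_subset (Finset.filter_subset (N ≤ ·) F) fun i hi hi' =>
    hzero i (not_le.1 fun hNi => hi' (Finset.mem_filter.2 ⟨hi, hNi⟩))] at hF
  have hNF (k : ℕ+) (hk : k ∈ F.filter (N ≤ ·)) : N ≤ k := (Finset.mem_filter.1 hk).2
  obtain ⟨rfl, d, t, E, G, hG, hθε, hheadG, hrest⟩ := h.exists_almost_isometric_headSplitting
    hθ0 hθ hK hθK hNK hle (by linarith) (by linarith) (fun B hB => by linarith [htail B hB]) hNF hF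
  obtain ⟨-, d', t', E', G', hG', -, -, hrest'⟩ := h.exists_almost_isometric_headSplitting
    hθ0 hθ hK hθK hNK hle hε6 (by linarith) (fun B hB => by linarith [htail B hB])
    (fun k hk => hNF k (hG.head_subset hk)) hheadG
  obtain ⟨D, hND, hD⟩ := hG.exists_mul_sum_add_sum_le (a := a) hG' hNK (hθ.trans (by norm_num))
  nlinarith [htail D hND]

end SequenceDichotomy

section Embedding

variable {θ c : ℝ} {X : Type*} [NormedAddCommGroup X] [NormedSpace ℝ X] {e : ℕ+ → X} {v : X}
  {a : ℕ+ → ℝ}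

/-- `e` is isometrically equivalent to the unit vector basis of `T[θ, S₁]`: the linear map with
`e_i ↦ e i` is an isometric embedding of `c₀₀` with the Tsirelson norm. -/
def IsTsirelsonSequence (θ : ℝ) (e : ℕ+ → X) : Prop :=
  ∀ x : ℕ+ →₀ ℝ, ‖Finsupp.linearCombination ℝ e x‖ = tnorm θ (Schreier 1) x

lemma linearCombination_trunc (e : ℕ+ → X) (a : ℕ+ → ℝ) (F : Finset ℕ+) :
    Finsupp.linearCombination ℝ e (trunc a F) = ∑ i ∈ F, a i • e i := by
  have hsupp : (trunc a F).support ⊆ F := Finsupp.support_indicator_subset F _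
  rw [Finsupp.linearCombination_apply,
    Finsupp.sum_of_support_subset _ hsupp (fun i c => c • e i) fun _ _ => zero_smul ℝ _]
  exact Finset.sum_congr rfl fun i hi => by rw [trunc_apply, if_pos hi]

lemma tendsto_linearCombination_trunc (ha : HasSum (fun i => a i • e i) v) :
    Tendsto (fun F => Finsupp.linearCombination ℝ e (trunc a F)) atTop (𝓝 v) := by
  simp only [linearCombination_trunc]
  exact ha

lemma IsTsirelsonSequence.isLUB_truncNorm (he : IsTsirelsonSequence θ e)
    (hθ0 : 0 ≤ θ) (hθ1 : θ ≤ 1) (ha : HasSum (fun i => a i • e i) v) :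
    IsLUB (Set.range (truncNorm θ a)) ‖v‖ := by
  refine isLUB_of_tendsto_atTop (truncNorm_mono hθ0 hθ1 a) ?_
  change Tendsto (fun F => tnorm θ (Schreier 1) (trunc a F)) atTop (𝓝 ‖v‖)
  simpa only [he _] using (tendsto_linearCombination_trunc ha).norm

lemma IsTsirelsonSequence.truncNorm_add_le_norm_add (he : IsTsirelsonSequence θ e)
    (hθ0 : 0 ≤ θ) (hθ1 : θ ≤ 1) (ha : HasSum (fun i => a i • e i) v) (w : ℕ+ → ℝ) (F : Finset ℕ+) :
    truncNorm θ (a + w) F ≤ ‖v + Finsupp.linearCombination ℝ e (trunc w F)‖ := by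
  refine ge_of_tendsto ((tendsto_linearCombination_trunc ha).add_const _).norm
    ((eventually_ge_atTop F).mono fun G hG => ?_)
  rw [← map_add, he]
  refine tnorm_le_tnorm_of_abs_le hθ0 hθ1 fun i => ?_
  simp only [Finsupp.add_apply, trunc_apply, Pi.add_apply]
  by_cases hi : i ∈ F
  · simp [hi, hG hi]
  · simp [hi]

lemma IsTsirelsonSequence.signedSumBound (he : IsTsirelsonSequence θ e)
    (hθ0 : 0 ≤ θ) (hθ1 : θ ≤ 1) (ha : HasSum (fun i => a i • e i) v)
    (h : ∀ y : ℕ+ →₀ ℝ, tnorm θ (Schreier 1) y = 1 →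
      min ‖v + Finsupp.linearCombination ℝ e y‖ ‖v - Finsupp.linearCombination ℝ e y‖ ≤ c) :
    SignedSumBound θ a c := by
  intro w F hw
  have hle (σ : ℝ) := he.truncNorm_add_le_norm_add hθ0 hθ1 ha (σ • w) F
  simp only [trunc_smul, map_smul] at hle
  rcases min_le_iff.1 (h (trunc w F) hw) with hadd | hsub
  · exact ⟨1, abs_one, (hle 1).trans (by rwa [one_smul])⟩
  · exact ⟨-1, by simp, (hle (-1)).trans (by rwa [neg_one_smul, ← sub_eq_add_neg])⟩

lemma IsTsirelsonSequence.tendsto_coord_zero (he : IsTsirelsonSequence θ e) (hθ1 : θ ≤ 1)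
    (ha : HasSum (fun i => a i • e i) v) : Tendsto a atTop (𝓝 0) := by
  have hterms : Tendsto (fun i => a i • e i) atTop (𝓝 0) :=
    ha.summable.tendsto_cofinite_zero.mono_left atTop_le_cofinite
  refine squeeze_zero_norm (fun i => ?_) (tendsto_zero_iff_norm_tendsto_zero.1 hterms)
  rw [← Finsupp.linearCombination_single, he]
  simpa using abs_apply_le_tnorm (S := Schreier 1) hθ1 (Finsupp.single i (a i)) i

end Embedding

section Characterization

variable {θ : ℝ} {a : ℕ+ → ℝ} {N : ℕ+}

lemma SignedSumBound.abs_le_of_abs_eq_one {K : ℕ} (h : SignedSumBound θ a (θ * (K + 1)))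
    (hθ0 : 0 ≤ θ) (hθ : θ ≤ 1 / 2) (hθK : θ * K ≤ 1) {n m : ℕ+} (hnm : n ≠ m)
    (hn : |a n| = 1) : |a m| ≤ θ := by
  have hmin := h.min_abs_add_one_le hθ0 hθ hnm
  rw [hn] at hmin
  exact (min_le_iff.1 (by linarith : min 1 |a m| ≤ θ)).resolve_left (by linarith)

lemma SignedSumBound.abs_eq_one_or_exists_abs_eq_one {K : ℕ}
    (h : SignedSumBound θ a (θ * (K + 1))) (hθ0 : 0 < θ) (hθ : θ ≤ 1 / 2) (hK : 2 ≤ K)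
    (hθK : θ * K ≤ 1) (hN : (N : ℕ) = K + 1) (ha : Tendsto a atTop (𝓝 0))
    (hlub : IsLUB (Set.range (truncNorm θ a)) 1) (hzero : ∀ i < N, a i = 0) :
    |a N| = 1 ∨ ∃ m, N < m ∧ |a m| = 1 ∧ ∀ i, i ≠ m → i ≠ N → a i = 0 := by
  have hθ1 : θ ≤ 1 := by linarith
  refine or_iff_not_imp_left.2 fun hne => ?_
  have hlt : |a N| < 1 :=
    ((abs_le_truncNorm hθ1 a (Finset.mem_singleton_self N)).trans (hlub.1 ⟨_, rfl⟩)).lt_of_ne hne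
  have hsum := h.successiveSumLeOne (N := N) hθ0 hθ1 (by omega) hθK (by omega) ha
  obtain ⟨m, hm, ham, htail⟩ := hsum.exists_abs_eq_one hθ0.le hθ fun c hc =>
    hsum.exists_tail_lt_truncNorm hθ0.le hθ hK hθK hN.le hlub hzero hlt hc
  exact ⟨m, hm, ham, fun i him hiN => hiN.lt_or_gt.elim (hzero i) (htail i · him)⟩

lemma mul_floor_inv_le_one (hθ0 : 0 < θ) : θ * ⌊θ⁻¹⌋₊ ≤ 1 :=
  (mul_le_mul_of_nonneg_left (Nat.floor_le (inv_nonneg.2 hθ0.le)) hθ0.le).trans_eq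
    (mul_inv_cancel₀ hθ0.ne')

lemma two_le_floor_inv (hθ0 : 0 < θ) (hθ : θ ≤ 1 / 2) : 2 ≤ ⌊θ⁻¹⌋₊ := by
  refine Nat.le_floor ?_
  rw [Nat.cast_ofNat, le_inv_comm₀ two_pos hθ0]
  linarith

theorem tsirelson_min_norm_small_char_general {X : Type*} [NormedAddCommGroup X]
    [NormedSpace ℝ X] {e : ℕ+ → X} (he : IsTsirelsonSequence θ e) (hθ0 : 0 < θ)
    (hθ : θ ≤ 1 / 2) {v : X} (hv : ‖v‖ = 1) (ha : HasSum (fun i => a i • e i) v)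
    (hzero : ∀ i : ℕ+, (i : ℕ) ≤ ⌊θ⁻¹⌋₊ → a i = 0)
    (h : ∀ y : ℕ+ →₀ ℝ, tnorm θ (Schreier 1) y = 1 →
      min ‖v + Finsupp.linearCombination ℝ e y‖ ‖v - Finsupp.linearCombination ℝ e y‖ ≤
        θ * ((⌊θ⁻¹⌋₊ : ℝ) + 1)) :
    (|a ⟨⌊θ⁻¹⌋₊ + 1, Nat.succ_pos _⟩| = 1 ∧
      ∀ i : ℕ+, i ≠ ⟨⌊θ⁻¹⌋₊ + 1, Nat.succ_pos _⟩ → |a i| ≤ θ) ∨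
    ∃ (m : ℕ+) (ε c : ℝ), ⌊θ⁻¹⌋₊ + 2 ≤ (m : ℕ) ∧ (ε = 1 ∨ ε = -1) ∧ |c| ≤ θ ∧
      v = ε • e m + c • e ⟨⌊θ⁻¹⌋₊ + 1, Nat.succ_pos _⟩ := by
  set N : ℕ+ := ⟨⌊θ⁻¹⌋₊ + 1, Nat.succ_pos _⟩
  have hθ1 : θ ≤ 1 := by linarith
  have hθK := mul_floor_inv_le_one hθ0
  have hbound := he.signedSumBound hθ0.le hθ1 ha h
  have hlub : IsLUB (Set.range (truncNorm θ a)) 1 := hv ▸ he.isLUB_truncNorm hθ0.le hθ1 ha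
  rcases hbound.abs_eq_one_or_exists_abs_eq_one (N := N) hθ0 hθ (two_le_floor_inv hθ0 hθ) hθK rfl
    (he.tendsto_coord_zero hθ1 ha) hlub (fun i hi => hzero i (Nat.lt_succ_iff.1 hi)) with
    hN | ⟨m, hm, ham, hsupp⟩
  · exact Or.inl ⟨hN, fun i hi => hbound.abs_le_of_abs_eq_one hθ0.le hθ hθK hi.symm hN⟩
  · refine Or.inr ⟨m, a m, a N, hm, eq_or_eq_neg_of_abs_eq ham,
      hbound.abs_le_of_abs_eq_one hθ0.le hθ hθK hm.ne' ham, ha.unique ?_⟩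
    rw [← Finset.sum_pair (f := fun i => a i • e i) hm.ne']
    refine hasSum_sum_of_ne_finset_zero fun i hi => ?_
    simp only [Finset.mem_insert, Finset.mem_singleton, not_or] at hi
    rw [hsupp i hi.1 hi.2, zero_smul]

end Characterization

/-- Suppose `v` in the unit sphere of `T[θ, S₁]` has coordinates
vanishing on `{1, …, ⌊θ⁻¹⌋}` and `min(‖v + y‖, ‖v − y‖) ≤ θ(⌊θ⁻¹⌋ + 1)` for every `y`
in the unit sphere. Then either `|v_{⌊θ⁻¹⌋+1}| = 1` with all other coordinates of
modulus `≤ θ`, or `v = ε e_m + a e_{⌊θ⁻¹⌋+1}` with `m ≥ ⌊θ⁻¹⌋ + 2`, `ε = ±1`, `|a| ≤ θ`. -/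
theorem tsirelson_min_norm_small_char
    (θ : ℝ) (hθ0 : 0 < θ) (hθ : θ ≤ 1 / 2)
    (X : Type*) [NormedAddCommGroup X] [NormedSpace ℝ X] (e : ℕ+ → X)
    (hX : IsTsirelsonSpace θ 1 X e)
    (v : X) (hv : ‖v‖ = 1) (a : ℕ+ → ℝ) (ha : HasSum (fun i => a i • e i) v)
    (hzero : ∀ i : ℕ+, (i : ℕ) ≤ ⌊θ⁻¹⌋₊ → a i = 0)
    (h : ∀ y : X, ‖y‖ = 1 → min ‖v + y‖ ‖v - y‖ ≤ θ * ((⌊θ⁻¹⌋₊ : ℝ) + 1)) :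
    (|a ⟨⌊θ⁻¹⌋₊ + 1, Nat.succ_pos _⟩| = 1 ∧
      ∀ i : ℕ+, i ≠ ⟨⌊θ⁻¹⌋₊ + 1, Nat.succ_pos _⟩ → |a i| ≤ θ) ∨
    ∃ (m : ℕ+) (ε c : ℝ), ⌊θ⁻¹⌋₊ + 2 ≤ (m : ℕ) ∧ (ε = 1 ∨ ε = -1) ∧ |c| ≤ θ ∧
      v = ε • e m + c • e ⟨⌊θ⁻¹⌋₊ + 1, Nat.succ_pos _⟩ := by
  exact tsirelson_min_norm_small_char_general hX.norm_embed hθ0 hθ hv ha hzero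
    fun y hy => h _ ((hX.norm_embed y).trans hy)
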